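/- Every totally positive matrix has a Γ-scaffolding: if X is an m×n totally positive real matrix and T = (t_{ij}) is defined by t_{ij} = det X[{i⋯},{j⋯}] / det X[{i+1⋯},{j+1⋯}] (with the convention that the determinant of an empty submatrix is 1), then T is a positive matrix and X_Γ(T) = X. -/

import Mathlib

/-!
Fix a target column `j`, and let `F b i` be the sum of the weights of the Γ-paths from row `i` to
column `j` all of whose turns lie in columns `≤ b` (`partialSum T j i (b + 1)`). Splitting off the
first turn of a path gives, for `b > j`, the recursion
`F b i = F (b - 1) i + t_{ib} / t_{i+1,b} * F b (i + 1)` (`partialSum_rec`), with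
`F b i = F (b - 1) i` in the last row and `F j i = t_{ij}`.

The closed form behind this recursion is, with `k = min(m - i, n - b)`,
`F b i = det X[{i,…,i+k}, {j, b+1,…,b+k}] / det X[{i+1,…,i+k}, {b+1,…,b+k}]`.
For `b = j` this is the given formula for `t_{ij}`, and for `b = n` it is `x_{ij}`, which is the
theorem. Rather than through determinantal identities, the quotient of minors is handled as what
is left in row `i` of column `j` once the columns `b+1, …, b+k` have been used to clear the rows
`i+1, …, i+k` (`Residue`). Total positivity makes the clearing block invertible, so a residue is
unique (`Residue.unique`); Cramer's rule identifies `t_{ij}` as a residue (`residue_diag`); and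
residues satisfy the recursion above by a column operation (`Residue.step`). Induction on `b`, and
for each `b` upwards from the last row, then gives `residue_partialSum`.
-/

open Finset

/-- A real matrix is totally positive if every minor (determinant of a square submatrix
obtained by selecting rows and columns in increasing order) is positive. -/
def TotallyPositive {m n : ℕ} (A : Matrix (Fin m) (Fin n) ℝ) : Prop :=
  ∀ (r : ℕ) (f : Fin r → Fin m) (g : Fin r → Fin n),
    StrictMono f → StrictMono g → 0 < (A.submatrix f g).det

/-- A matrix is (strongly) positive if all of its entries are positive. -/
def EntrywisePos {m n : ℕ} (A : Matrix (Fin m) (Fin n) ℝ) : Prop :=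
  ∀ i j, 0 < A i j

/-- The weight of the Γ-path encoded by the pair of finsets `(I, J)`.
A Γ-path with Γ-turns `(i₁,j₁), …, (i_p,j_p)`, where `i₁ < i₂ < ⋯ < i_p` and
`j₁ > j₂ > ⋯ > j_p`, corresponds to the pair `I = {i₁,…,i_p}`, `J = {j₁,…,j_p}`;
the path runs from row vertex `i₁ = min I` to column vertex `j_p = min J`.
Its weight is `t_{i₁j₁} · ∏_{s=1}^{p−1} t_{i_{s+1} j_s}⁻¹ · t_{i_{s+1} j_{s+1}}`. -/
noncomputable def gammaWeight {m n : ℕ} (T : Matrix (Fin m) (Fin n) ℝ)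
    (I : Finset (Fin m)) (J : Finset (Fin n)) : ℝ :=
  if h : I.Nonempty ∧ J.Nonempty ∧ I.card = J.card then
    let p := I.card
    let row : ℕ → Fin m := fun s => (I.sort (· ≤ ·)).getD s (I.min' h.1)
    let col : ℕ → Fin n := fun s => (J.sort (· ≤ ·)).getD (p - 1 - s) (J.min' h.2.1)
    T (row 0) (col 0) *
      ∏ s ∈ Finset.range (p - 1),
        ((T (row (s + 1)) (col s))⁻¹ * T (row (s + 1)) (col (s + 1)))
  else 0

/-- The Γ-path-sum matrix `X_Γ(T)`: its `(i,j)` entry is the sum of the weights of all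
Γ-paths from row vertex `i` to column vertex `j`. -/
noncomputable def XGamma {m n : ℕ} (T : Matrix (Fin m) (Fin n) ℝ) :
    Matrix (Fin m) (Fin n) ℝ :=
  Matrix.of fun i j =>
    ∑ I ∈ Finset.univ.filter (fun I : Finset (Fin m) => I.min = (i : WithTop (Fin m))),
      ∑ J ∈ Finset.univ.filter (fun J : Finset (Fin n) =>
          J.min = (j : WithTop (Fin n)) ∧ J.card = I.card),
        gammaWeight T I J

/-- The weight of the L-path encoded by the pair of finsets `(I, J)`.
An L-path with turns `(i₁,j₁), …, (i_p,j_p)`, where `i₁ > i₂ > ⋯ > i_p` and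
`j₁ < j₂ < ⋯ < j_p`, corresponds to `I = {i₁,…,i_p}`, `J = {j₁,…,j_p}`;
the path runs from row vertex `i₁ = max I` to column vertex `j_p = max J`. -/
noncomputable def lWeight {m n : ℕ} (T : Matrix (Fin m) (Fin n) ℝ)
    (I : Finset (Fin m)) (J : Finset (Fin n)) : ℝ :=
  if h : I.Nonempty ∧ J.Nonempty ∧ I.card = J.card then
    let p := I.card
    let row : ℕ → Fin m := fun s => (I.sort (· ≤ ·)).getD (p - 1 - s) (I.min' h.1)
    let col : ℕ → Fin n := fun s => (J.sort (· ≤ ·)).getD s (J.min' h.2.1)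
    T (row 0) (col 0) *
      ∏ s ∈ Finset.range (p - 1),
        ((T (row (s + 1)) (col s))⁻¹ * T (row (s + 1)) (col (s + 1)))
  else 0

/-- The L-path-sum matrix `X_L(T)`. -/
noncomputable def XL {m n : ℕ} (T : Matrix (Fin m) (Fin n) ℝ) :
    Matrix (Fin m) (Fin n) ℝ :=
  Matrix.of fun i j =>
    ∑ I ∈ Finset.univ.filter (fun I : Finset (Fin m) => I.max = (i : WithBot (Fin m))),
      ∑ J ∈ Finset.univ.filter (fun J : Finset (Fin n) =>
          J.max = (j : WithBot (Fin n)) ∧ J.card = I.card),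
        lWeight T I J

/-- The set of internal vertices traversed by the Γ-path encoded by `(I, J)`:
horizontal segments `{(i_s, b) : j_s ≤ b ≤ j_{s-1}}` (with `j₀` interpreted as the last
column) and vertical segments `{(a, j_s) : i_s ≤ a ≤ i_{s+1}}` (with `i_{p+1}` interpreted
as the last row). -/
def pathVerts {m n : ℕ} (I : Finset (Fin m)) (J : Finset (Fin n)) :
    Finset (Fin m × Fin n) :=
  Finset.univ.filter fun v =>
    (∃ s ∈ Finset.range I.card,
        v.1 = (I.sort (· ≤ ·)).getD s v.1 ∧
        (J.sort (· ≤ ·)).getD (J.card - 1 - s) v.2 ≤ v.2 ∧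
        (s = 0 ∨ v.2 ≤ (J.sort (· ≤ ·)).getD (J.card - s) v.2)) ∨
    (∃ s ∈ Finset.range I.card,
        v.2 = (J.sort (· ≤ ·)).getD (J.card - 1 - s) v.2 ∧
        (I.sort (· ≤ ·)).getD s v.1 ≤ v.1 ∧
        (s + 1 = I.card ∨ v.1 ≤ (I.sort (· ≤ ·)).getD (s + 1) v.1))

/-- The sequence of matrices produced by Cauchon's Algorithm: `cauchonSeq X t` is the
matrix obtained after performing the first `t` steps, the steps being indexed by the
positions `(i,j) ∈ [m]×[n]` (1-based) in increasing reverse lexicographic order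
(`(m,n)` first); the step at 1-based position `(i,j)` is performed on `cauchonSeq X t`
with `t = (m−i)·n + (n−j)`, so that the matrix `X^{(i,j)}` of Cauchon's Algorithm is
`cauchonSeq X ((m−i)·n + (n−j))`. -/
noncomputable def cauchonSeq {m n : ℕ} (X : Matrix (Fin m) (Fin n) ℝ) :
    ℕ → Matrix (Fin m) (Fin n) ℝ
  | 0 => X
  | t + 1 =>
    let Y := cauchonSeq X t
    Matrix.of fun k l =>
      let i0 : Fin m := ⟨m - 1 - t / n,
        lt_of_le_of_lt (Nat.sub_le _ _) (by have := k.isLt; omega)⟩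
      let j0 : Fin n := ⟨n - 1 - t % n,
        lt_of_le_of_lt (Nat.sub_le _ _) (by have := l.isLt; omega)⟩
      if (k : ℕ) < (i0 : ℕ) ∧ (l : ℕ) < (j0 : ℕ) then
        Y k l - Y k j0 * (Y i0 j0)⁻¹ * Y i0 l
      else Y k l

/-- The output `T = X^{(1,1)}` of Cauchon's Algorithm. -/
noncomputable def cauchonOutput {m n : ℕ} (X : Matrix (Fin m) (Fin n) ℝ) :
    Matrix (Fin m) (Fin n) ℝ :=
  cauchonSeq X ((m - 1) * n + (n - 1))

/-- `contigMinorTL A i j` (1-based `i`, `j`) is the minor `det A[{i⋯},{j⋯}]` of the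
largest contiguous submatrix of `A` with top-left corner `(i,j)`, i.e. with rows
`i, …, i+k` and columns `j, …, j+k` where `k = min(M−i, N−j)`; it is `1` (the empty
determinant) if `(i,j)` is out of range. -/
noncomputable def contigMinorTL {M N : ℕ} (A : Matrix (Fin M) (Fin N) ℝ) (i j : ℕ) : ℝ :=
  if h : 1 ≤ i ∧ i ≤ M ∧ 1 ≤ j ∧ j ≤ N then
    (A.submatrix
      (fun s : Fin (min (M - i) (N - j) + 1) =>
        (⟨i - 1 + (s : ℕ), by have := s.isLt; omega⟩ : Fin M))
      (fun s : Fin (min (M - i) (N - j) + 1) =>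
        (⟨j - 1 + (s : ℕ), by have := s.isLt; omega⟩ : Fin N))).det
  else 1

/-- `borderMinorTL A i₀ j₀ i j` (1-based indices, `i₀ < i`, `j₀ < j`) is the minor
`det A[{i₀, i⋯},{j₀, j⋯}]` with rows `{i₀} ∪ {i, …, i+k}` and columns
`{j₀} ∪ {j, …, j+k}` where `k = min(M−i, N−j)`; when the contiguous part is out of range
(`i > M` or `j > N`) it is the single entry `A[{i₀},{j₀}]`, and it is `1` if `(i₀,j₀)`
is out of range. -/
noncomputable def borderMinorTL {M N : ℕ} (A : Matrix (Fin M) (Fin N) ℝ)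
    (i₀ j₀ i j : ℕ) : ℝ :=
  if h : 1 ≤ i₀ ∧ i₀ ≤ M ∧ 1 ≤ j₀ ∧ j₀ ≤ N then
    if h2 : i₀ < i ∧ i ≤ M ∧ j₀ < j ∧ j ≤ N then
      (A.submatrix
        (fun s : Fin (min (M - i) (N - j) + 2) =>
          if (s : ℕ) = 0 then (⟨i₀ - 1, by omega⟩ : Fin M)
          else ⟨i - 1 + ((s : ℕ) - 1), by have := s.isLt; omega⟩)
        (fun s : Fin (min (M - i) (N - j) + 2) =>
          if (s : ℕ) = 0 then (⟨j₀ - 1, by omega⟩ : Fin N)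
          else ⟨j - 1 + ((s : ℕ) - 1), by have := s.isLt; omega⟩)).det
    else A ⟨i₀ - 1, by omega⟩ ⟨j₀ - 1, by omega⟩
  else 1

/-- `borderMinorBR A i j i₀ j₀` (1-based indices, `i < i₀`, `j < j₀`) is the minor
`det A[{⋯i, i₀},{⋯j, j₀}]` with rows `{i−k, …, i} ∪ {i₀}` and columns
`{j−k, …, j} ∪ {j₀}` where `k = min(i−1, j−1)`; when the contiguous part is empty
(`i = 0` or `j = 0`) it is the single entry `A[{i₀},{j₀}]`, and it is `1` if `(i₀,j₀)`
is out of range. -/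
noncomputable def borderMinorBR {M N : ℕ} (A : Matrix (Fin M) (Fin N) ℝ)
    (i j i₀ j₀ : ℕ) : ℝ :=
  if h : 1 ≤ i₀ ∧ i₀ ≤ M ∧ 1 ≤ j₀ ∧ j₀ ≤ N then
    if h2 : 1 ≤ i ∧ i < i₀ ∧ 1 ≤ j ∧ j < j₀ then
      (A.submatrix
        (fun s : Fin (min (i - 1) (j - 1) + 2) =>
          if (s : ℕ) = min (i - 1) (j - 1) + 1 then (⟨i₀ - 1, by omega⟩ : Fin M)
          else ⟨i - 1 - min (i - 1) (j - 1) + (s : ℕ), by have := s.isLt; omega⟩)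
        (fun s : Fin (min (i - 1) (j - 1) + 2) =>
          if (s : ℕ) = min (i - 1) (j - 1) + 1 then (⟨j₀ - 1, by omega⟩ : Fin N)
          else ⟨j - 1 - min (i - 1) (j - 1) + (s : ℕ), by have := s.isLt; omega⟩)).det
    else A ⟨i₀ - 1, by omega⟩ ⟨j₀ - 1, by omega⟩
  else 1

/-! ### Contiguous minors and residues -/

/-- The entries of `X` with 0-based natural-number indices, extended by zero. -/
noncomputable def natEntry {m n : ℕ} (X : Matrix (Fin m) (Fin n) ℝ) (a c : ℕ) : ℝ :=
  if h : a < m ∧ c < n then X ⟨a, h.1⟩ ⟨c, h.2⟩ else 0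

/-- The contiguous `k × k` minor of `X` with 0-based top-left corner `(i, b)`. -/
noncomputable def contigDet {m n : ℕ} (X : Matrix (Fin m) (Fin n) ℝ) (i b k : ℕ) : ℝ :=
  (Matrix.of fun s t : Fin k => natEntry X (i + s) (b + t)).det

lemma contigDet_pos {m n : ℕ} {X : Matrix (Fin m) (Fin n) ℝ} (hX : TotallyPositive X)
    {i b k : ℕ} (hi : i + k ≤ m) (hb : b + k ≤ n) : 0 < contigDet X i b k := by
  have h := hX k (fun s => ⟨i + s, by omega⟩) (fun s => ⟨b + s, by omega⟩)
    (fun s t hst => by simpa using hst) (fun s t hst => by simpa using hst)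
  unfold contigDet
  convert h using 2
  ext s t
  have : i + (s : ℕ) < m ∧ b + (t : ℕ) < n := by omega
  simp [natEntry, this]

lemma contigMinorTL_eq {m n : ℕ} (X : Matrix (Fin m) (Fin n) ℝ) (i b : ℕ) :
    contigMinorTL X (i + 1) (b + 1) = contigDet X i b (min (m - i) (n - b)) := by
  by_cases h : i < m ∧ b < n
  · have hk : min (m - i) (n - b) = min (m - (i + 1)) (n - (b + 1)) + 1 := by omega
    rw [hk, contigMinorTL, dif_pos (by omega), contigDet]
    congr 1
    ext s t
    have : i + (s : ℕ) < m ∧ b + (t : ℕ) < n := by omega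
    simp [natEntry, this]
  · have hk : min (m - i) (n - b) = 0 := by omega
    rw [hk, contigMinorTL, dif_neg (by omega), contigDet, Matrix.det_isEmpty]

lemma sum_range_eq_sum_fin {n p L : ℕ} (hL : p + L ≤ n) (u y : ℕ → ℝ)
    (hu : ∀ c, u c ≠ 0 → p ≤ c ∧ c < p + L) :
    ∑ c ∈ range n, u c * y c = ∑ s : Fin L, u (p + s) * y (p + s) := by
  rw [← Finset.sum_range (fun s => u (p + s) * y (p + s)),
    show ∑ s ∈ range L, u (p + s) * y (p + s) = ∑ c ∈ Finset.Ico p (p + L), u c * y c by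
      rw [Finset.sum_Ico_eq_sum_range]; simp]
  symm
  apply Finset.sum_subset
  · intro c hc
    simp only [Finset.mem_Ico, Finset.mem_range] at hc ⊢
    omega
  · intro c _ hc
    by_cases h0 : u c = 0
    · simp [h0]
    · exact absurd (Finset.mem_Ico.2 (hu c h0)) hc

/-- With `K = min (m - 1 - i) (n - 1 - b)`, the assertion that column `j` of `X` plus some
linear combination of the columns `b + 1, …, b + K` has, on the rows `i, …, i + K`, the entry
`f` in row `i` and zeros below it. When the minor with rows `i + 1, …, i + K` and columns
`b + 1, …, b + K` is nonzero, `f` is the ratio of the minor with rows `i, …, i + K` and columns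
`j, b + 1, …, b + K` to that minor. -/
def Residue {m n : ℕ} (X : Matrix (Fin m) (Fin n) ℝ) (i j b : ℕ) (f : ℝ) : Prop :=
  ∃ u : ℕ → ℝ, u j = 1 ∧
    (∀ c, c ≠ j → u c ≠ 0 → b < c ∧ c ≤ b + min (m - 1 - i) (n - 1 - b)) ∧
    ∀ a, i ≤ a → a ≤ i + min (m - 1 - i) (n - 1 - b) →
      ∑ c ∈ range n, u c * natEntry X a c = if a = i then f else 0

lemma Residue.unique {m n : ℕ} {X : Matrix (Fin m) (Fin n) ℝ} (hX : TotallyPositive X)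
    {i j b : ℕ} (hi : i < m) (hb : b < n) {f f' : ℝ}
    (h : Residue X i j b f) (h' : Residue X i j b f') : f = f' := by
  obtain ⟨u, huj, hus, hu⟩ := h
  obtain ⟨v, hvj, hvs, hv⟩ := h'
  set K := min (m - 1 - i) (n - 1 - b) with hK
  have hw : ∀ c, u c - v c ≠ 0 → b + 1 ≤ c ∧ c < b + 1 + K := by
    intro c hc
    have hcj : c ≠ j := by
      rintro rfl
      simp [huj, hvj] at hc
    by_cases h0 : u c = 0
    · have := hvs c hcj (by intro h1; simp [h0, h1] at hc)
      omega
    · have := hus c hcj h0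
      omega
  have hsum : ∀ a, i ≤ a → a ≤ i + K →
      ∑ s : Fin K, (u (b + 1 + s) - v (b + 1 + s)) * natEntry X a (b + 1 + s) =
        if a = i then f - f' else 0 := by
    intro a h1 h2
    rw [← sum_range_eq_sum_fin (n := n) (by omega) (fun c => u c - v c) _ hw]
    simp only [sub_mul, Finset.sum_sub_distrib, hu a h1 h2, hv a h1 h2]
    split_ifs <;> simp
  have hdet := (contigDet_pos hX (i := i + 1) (b := b + 1) (k := K) (by omega) (by omega)).ne'
  have hz := Matrix.eq_zero_of_mulVec_eq_zero hdet
    (v := fun s : Fin K => u (b + 1 + s) - v (b + 1 + s)) (by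
      ext s
      have := hsum (i + 1 + s) (by omega) (by omega)
      rw [if_neg (by omega)] at this
      simp only [Matrix.mulVec, dotProduct, Matrix.of_apply, Pi.zero_apply]
      rw [← this]
      exact Finset.sum_congr rfl fun t _ => mul_comm _ _)
  have := hsum i le_rfl (by omega)
  rw [if_pos rfl, Finset.sum_eq_zero] at this
  · linarith
  · intro s _
    have := congrFun hz s
    simp only [Pi.zero_apply] at this
    rw [this, zero_mul]

/-- By Cramer's rule, the ratio of consecutive contiguous minors along a diagonal is a residue. -/
lemma residue_diag {m n : ℕ} {X : Matrix (Fin m) (Fin n) ℝ} (hX : TotallyPositive X)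
    {i b : ℕ} (hi : i < m) (hb : b < n) :
    Residue X i b b (contigMinorTL X (i + 1) (b + 1) / contigMinorTL X (i + 2) (b + 2)) := by
  set K := min (m - 1 - i) (n - 1 - b) with hK
  rw [contigMinorTL_eq, contigMinorTL_eq X (i + 1) (b + 1),
    show min (m - i) (n - b) = K + 1 by omega,
    show min (m - (i + 1)) (n - (b + 1)) = K by omega]
  have hA := (contigDet_pos hX (i := i) (b := b) (k := K + 1) (by omega) (by omega)).ne'
  have hM := (contigDet_pos hX (i := i + 1) (b := b + 1) (k := K) (by omega) (by omega)).ne'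
  set t := contigDet X i b (K + 1) / contigDet X (i + 1) (b + 1) K with ht
  set A : Matrix (Fin (K + 1)) (Fin (K + 1)) ℝ :=
    Matrix.of fun s t => natEntry X (i + s) (b + t) with hAdef
  have hAu : IsUnit A.det := isUnit_iff_ne_zero.2 hA
  -- The coefficients solve `A x = t e₀`, so the leading one is `t * det M / det A = 1`, where `M`
  -- is `A` without its first row and column.
  let u : ℕ → ℝ := fun c => if h : b ≤ c ∧ c - b < K + 1 then t * A⁻¹ ⟨c - b, h.2⟩ 0 else 0
  have hu : ∀ s : Fin (K + 1), u (b + s) = t * A⁻¹ s 0 := by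
    intro s
    have := s.isLt
    have h : b ≤ b + (s : ℕ) ∧ b + (s : ℕ) - b < K + 1 := by omega
    simp only [u, dif_pos h, Nat.add_sub_cancel_left]
  refine ⟨u, ?_, ?_, ?_⟩
  · have h0 := hu 0
    have hadj : A.adjugate 0 0 = contigDet X (i + 1) (b + 1) K := by
      rw [Matrix.adjugate_fin_succ_eq_det_submatrix, contigDet]
      simp only [Fin.val_zero, add_zero, pow_zero, one_mul]
      congr 1
      ext s t
      change natEntry X (i + (s + 1)) (b + (t + 1)) = natEntry X (i + 1 + s) (b + 1 + t)
      congr 1 <;> omega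
    simp only [Fin.val_zero, add_zero] at h0
    rw [h0, Matrix.inv_def, Matrix.smul_apply, hadj, Ring.inverse_eq_inv', ht,
      show A.det = contigDet X i b (K + 1) from rfl, smul_eq_mul]
    field_simp
  · intro c hc h0
    have : b ≤ c ∧ c - b < K + 1 := by
      by_contra h
      exact h0 (dif_neg h)
    omega
  · intro a h1 h2
    rw [sum_range_eq_sum_fin (p := b) (L := K + 1) (by omega) u _ (by
      intro c h0
      have : b ≤ c ∧ c - b < K + 1 := by
        by_contra h
        exact h0 (dif_neg h)
      omega)]
    have hmul := congrFun (congrFun (Matrix.mul_nonsing_inv A hAu) ⟨a - i, by omega⟩) 0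
    rw [Matrix.mul_apply, Matrix.one_apply] at hmul
    have hai : i + (a - i) = a := by omega
    change ∑ s : Fin (K + 1), natEntry X (i + (a - i)) (b + s) * A⁻¹ s 0 = _ at hmul
    rw [hai] at hmul
    have : ∀ s : Fin (K + 1), u (b + s) * natEntry X a (b + s) =
        t * (natEntry X a (b + s) * A⁻¹ s 0) := by
      intro s
      rw [hu]
      ring
    simp only [this]
    rw [← Finset.mul_sum, hmul]
    have hiff : ((⟨a - i, by omega⟩ : Fin (K + 1)) = 0) ↔ a = i := by
      rw [Fin.ext_iff]
      simp
      omega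
    simp only [hiff]
    split_ifs <;> simp

/-- The recursion for residues. In terms of minors it comprises the Desnanot–Jacobi identity and
a three-term Plücker relation. Write `w_j` and `w_{b+1}` for the combinations of columns behind the
residues `g` and `t'` in row `i + 1`. Then `w_j - (g / t') w_{b+1}` vanishes on the rows from
`i + 1` on and so computes the residue `f` at `b`; adding `g / t'` times the combination behind `t`
cancels column `b + 1` and leaves `f + t / t' * g` in row `i`. -/
lemma Residue.step {m n : ℕ} {X : Matrix (Fin m) (Fin n) ℝ} (hX : TotallyPositive X)
    {i j b : ℕ} (hi : i + 1 < m) (hb : b + 1 < n) (hj : j ≤ b) {f g t t' : ℝ} (ht' : t' ≠ 0)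
    (hf : Residue X i j b f) (hg : Residue X (i + 1) j (b + 1) g)
    (ht : Residue X i (b + 1) (b + 1) t) (hs : Residue X (i + 1) (b + 1) (b + 1) t') :
    Residue X i j (b + 1) (f + t / t' * g) := by
  obtain ⟨u, huj, hus, hu⟩ := hg
  obtain ⟨v, hvj, hvs, hv⟩ := hs
  obtain ⟨w, hwj, hws, hw⟩ := ht
  have hub : u (b + 1) = 0 := by
    by_contra h
    have := hus (b + 1) (by omega) h
    omega
  have hvj0 : v j = 0 := by
    by_contra h
    have := hvs j (by omega) h
    omega
  have hwj0 : w j = 0 := by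
    by_contra h
    have := hws j (by omega) h
    omega
  set f' := ∑ c ∈ range n, (u c - g / t' * v c) * natEntry X i c with hf'
  have hzero : ∀ a, i ≤ a → a ≤ i + min (m - 1 - i) (n - 1 - b) →
      ∑ c ∈ range n, (u c - g / t' * v c) * natEntry X a c = if a = i then f' else 0 := by
    intro a h1 h2
    by_cases ha : a = i
    · rw [if_pos ha, ha]
    · have e1 := hu a (by omega) (by omega)
      have e2 := hv a (by omega) (by omega)
      simp only [sub_mul, mul_assoc, Finset.sum_sub_distrib]
      rw [← Finset.mul_sum, e1, e2, if_neg ha]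
      split_ifs
      · field_simp
        ring
      · ring
  have hff : f = f' := by
    refine hf.unique hX (by omega) (by omega) ⟨fun c => u c - g / t' * v c, ?_, ?_, hzero⟩
    · simp [huj, hvj0]
    · intro c hc h0
      by_cases hcb : c = b + 1
      · omega
      · by_cases hc0 : u c = 0
        · have := hvs c hcb (by intro h1; simp [hc0, h1] at h0)
          omega
        · have := hus c hc hc0
          omega
  refine ⟨fun c => u c - g / t' * v c + g / t' * w c, ?_, ?_, ?_⟩
  · simp [huj, hvj0, hwj0]
  · intro c hc h0
    by_cases hcb : c = b + 1
    · subst hcb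
      simp [hub, hvj, hwj] at h0
    · by_cases hc0 : u c = 0
      · by_cases hc1 : v c = 0
        · have := hws c hcb (by intro h1; simp [hc0, hc1, h1] at h0)
          omega
        · have := hvs c hcb hc1
          omega
      · have := hus c hc hc0
        omega
  · intro a h1 h2
    have e1 := hzero a h1 (by omega)
    have e2 := hw a h1 h2
    simp only [add_mul (_ - _), mul_assoc (g / t') (w _), Finset.sum_add_distrib]
    rw [← Finset.mul_sum, e1, e2, hff]
    split_ifs
    · ring
    · ring

/-- In the last row, or when `b` is the last column, no elimination takes place. -/
lemma residue_iff_of_min_eq_zero {m n : ℕ} {X : Matrix (Fin m) (Fin n) ℝ} {i j b : ℕ}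
    (hj : j < n) (h0 : min (m - 1 - i) (n - 1 - b) = 0) {f : ℝ} :
    Residue X i j b f ↔ natEntry X i j = f := by
  constructor
  · rintro ⟨u, huj, hus, hu⟩
    have h := hu i le_rfl (by omega)
    rw [if_pos rfl, Finset.sum_eq_single j] at h
    · simpa [huj] using h
    · intro c _ hc
      have : u c = 0 := by
        by_contra h1
        have := hus c hc h1
        omega
      simp [this]
    · intro h1
      simp at h1
      omega
  · intro h
    refine ⟨fun c => if c = j then 1 else 0, by simp, ?_, ?_⟩
    · intro c hc h1
      simp [hc] at h1
    · intro a h1 h2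
      have : a = i := by omega
      subst this
      simp [hj, h]

/-! ### Path sums -/

lemma sort_insert_min {m : ℕ} {I : Finset (Fin m)} {i : Fin m} (hi : ∀ x ∈ I, i < x) :
    (insert i I).sort (· ≤ ·) = i :: I.sort (· ≤ ·) :=
  Finset.sort_insert _ (fun x hx => (hi x hx).le) (fun h => (hi i h).false)

lemma sort_insert_max {n : ℕ} {J : Finset (Fin n)} {b : Fin n} (hb : ∀ x ∈ J, x < b) :
    (insert b J).sort (· ≤ ·) = J.sort (· ≤ ·) ++ [b] := by
  have hnd : (J.sort (· ≤ ·) ++ [b]).Nodup := by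
    rw [List.nodup_append]
    refine ⟨Finset.sort_nodup _ _, by simp, ?_⟩
    intro x hx y hy
    simp only [Finset.mem_sort, List.mem_singleton] at hx hy
    exact hy ▸ (hb x hx).ne
  have hs : insert b J = (J.sort (· ≤ ·) ++ [b]).toFinset := by
    ext x
    simp
  rw [hs, List.toFinset_sort _ hnd, List.pairwise_append]
  refine ⟨Finset.pairwise_sort _ _, by simp, ?_⟩
  intro x hx y hy
  simp only [Finset.mem_sort, List.mem_singleton] at hx hy
  exact hy ▸ (hb x hx).le

lemma gammaWeight_singleton {m n : ℕ} (T : Matrix (Fin m) (Fin n) ℝ) (i : Fin m) (j : Fin n) :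
    gammaWeight T {i} {j} = T i j := by
  simp [gammaWeight]

/-- Removing the first Γ-turn of a path with at least two turns. -/
lemma gammaWeight_insert {m n : ℕ} (T : Matrix (Fin m) (Fin n) ℝ)
    {I : Finset (Fin m)} {J : Finset (Fin n)} {i : Fin m} {b : Fin n}
    (hI : I.Nonempty) (hc : J.card = I.card) (hi : ∀ x ∈ I, i < x) (hb : ∀ x ∈ J, x < b) :
    gammaWeight T (insert i I) (insert b J) =
      T i b * ((T (I.min' hI) b)⁻¹ * gammaWeight T I J) := by
  have hJ : J.Nonempty := by rw [← Finset.card_pos, hc, Finset.card_pos]; exact hI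
  have hiI : i ∉ I := fun h => (hi i h).false
  have hbJ : b ∉ J := fun h => (hb b h).false
  obtain ⟨k, hk⟩ : ∃ k, I.card = k + 1 :=
    Nat.exists_eq_succ_of_ne_zero (Finset.card_pos.2 hI).ne'
  have hlI : (I.sort (· ≤ ·)).length = k + 1 := by rw [Finset.length_sort, hk]
  have hlJ : (J.sort (· ≤ ·)).length = k + 1 := by rw [Finset.length_sort, hc, hk]
  have hcI : (insert i I).card = k + 2 := by rw [Finset.card_insert_of_notMem hiI, hk]
  have hcJ : (insert b J).card = k + 2 := by rw [Finset.card_insert_of_notMem hbJ, hc, hk]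
  rw [gammaWeight, dif_pos ⟨Finset.insert_nonempty _ _, Finset.insert_nonempty _ _,
    hcI.trans hcJ.symm⟩, gammaWeight, dif_pos ⟨hI, hJ, hc.symm⟩]
  simp only [sort_insert_min hi, sort_insert_max hb, hcI, hk]
  have hr : ∀ s d, s < k + 1 → (i :: I.sort (· ≤ ·)).getD (s + 1) d =
      (I.sort (· ≤ ·)).getD s (I.min' hI) := by
    intro s d hs
    rw [List.getD_cons_succ, List.getD_eq_getElem _ _ (by omega),
      List.getD_eq_getElem _ _ (by omega)]
  have hl0 : ∀ d, (J.sort (· ≤ ·) ++ [b]).getD (k + 2 - 1 - 0) d = b := by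
    intro d
    rw [List.getD_append_right _ _ _ _ (by omega)]
    simp [hlJ]
  have hl : ∀ s d, s < k + 1 → (J.sort (· ≤ ·) ++ [b]).getD (k + 2 - 1 - (s + 1)) d =
      (J.sort (· ≤ ·)).getD (k + 1 - 1 - s) (J.min' hJ) := by
    intro s d hs
    rw [List.getD_append _ _ _ _ (by omega), List.getD_eq_getElem _ _ (by omega),
      List.getD_eq_getElem _ _ (by omega)]
    congr 1
    omega
  have hmin : (I.sort (· ≤ ·)).getD 0 (I.min' hI) = I.min' hI := by
    rw [List.getD_eq_getElem _ _ (by omega), Finset.min'_eq_sorted_zero]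
  rw [show k + 2 - 1 = k + 1 from rfl] at hl0 hl ⊢
  rw [Finset.prod_range_succ', hl0, hr 0 _ (by omega), hl 0 _ (by omega), hmin,
    List.getD_cons_zero, Finset.prod_congr rfl fun s hs => by
      have := Finset.mem_range.1 hs
      rw [hr (s + 1) _ (by omega), hl (s + 1) _ (by omega), hl s _ (by omega)]]
  rw [show k + 1 - 1 = k from rfl]
  ring

/-- The Γ-paths from row `i` to column `j` whose turns all lie in columns `< b`, each encoded by
its set of turning rows and its set of turning columns. -/
def pathsBelow {m n : ℕ} (j : Fin n) (i : Fin m) (b : ℕ) :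
    Finset (Finset (Fin m) × Finset (Fin n)) :=
  Finset.univ.filter fun p => p.1.min = (i : WithTop (Fin m)) ∧
    p.2.min = (j : WithTop (Fin n)) ∧ p.2.card = p.1.card ∧ ∀ x ∈ p.2, (x : ℕ) < b

/-- The Γ-paths to column `j` that start strictly below row `i` and whose turns all lie in
columns `< b`. -/
def tailsBelow {m n : ℕ} (j : Fin n) (i : ℕ) (b : ℕ) :
    Finset (Finset (Fin m) × Finset (Fin n)) :=
  Finset.univ.filter fun p => (∀ x ∈ p.1, i < (x : ℕ)) ∧
    p.2.min = (j : WithTop (Fin n)) ∧ p.2.card = p.1.card ∧ ∀ x ∈ p.2, (x : ℕ) < b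

/-- The path sum from row `i` to column `j` restricted to turns in columns `< b`. -/
noncomputable def partialSum {m n : ℕ} (T : Matrix (Fin m) (Fin n) ℝ) (j : Fin n) (i : Fin m)
    (b : ℕ) : ℝ :=
  ∑ p ∈ pathsBelow j i b, gammaWeight T p.1 p.2

/-- The weight of the path `p`, entered by coming down column `b` to its starting row
(`0` if `p` has no turns). -/
noncomputable def enteredWeight {m n : ℕ} (T : Matrix (Fin m) (Fin n) ℝ) (b : Fin n)
    (p : Finset (Fin m) × Finset (Fin n)) : ℝ :=
  if h : p.1.Nonempty then (T (p.1.min' h) b)⁻¹ * gammaWeight T p.1 p.2 else 0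

lemma XGamma_apply {m n : ℕ} (T : Matrix (Fin m) (Fin n) ℝ) (i : Fin m) (j : Fin n) :
    XGamma T i j = partialSum T j i n := by
  simp only [XGamma, Matrix.of_apply, partialSum, pathsBelow]
  rw [Finset.sum_filter]
  simp only [Finset.sum_filter]
  rw [← Finset.univ_product_univ, Finset.sum_product]
  refine Finset.sum_congr rfl fun I _ => ?_
  split_ifs with h <;> simp [h]

lemma min_eq_coe_iff {m : ℕ} {I : Finset (Fin m)} {i : Fin m} :
    I.min = (i : WithTop (Fin m)) ↔ i ∈ I ∧ ∀ x ∈ I, i ≤ x := by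
  constructor
  · intro h
    exact ⟨Finset.mem_of_min h, fun x hx => by
      have := Finset.min_le hx
      rw [h] at this
      exact_mod_cast this⟩
  · rintro ⟨h1, h2⟩
    exact le_antisymm (Finset.min_le h1) (Finset.le_min fun x hx => by exact_mod_cast h2 x hx)

/-- For `b > j`, a path turning in column `b` makes its first turn there. -/
lemma partialSum_succ {m n : ℕ} (T : Matrix (Fin m) (Fin n) ℝ) {j b : Fin n} (hjb : j < b)
    (i : Fin m) :
    partialSum T j i (b + 1) = partialSum T j i b +
      T i b * ∑ p ∈ tailsBelow j (i : ℕ) (b : ℕ), enteredWeight T b p := by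
  rw [partialSum, ← Finset.sum_filter_not_add_sum_filter _ (fun p => b ∈ p.2)]
  congr 1
  · rw [partialSum]
    refine Finset.sum_congr ?_ fun _ _ => rfl
    ext p
    simp only [pathsBelow, Finset.mem_filter, Finset.mem_univ, true_and]
    constructor
    · rintro ⟨⟨h1, h2, h3, h4⟩, h5⟩
      refine ⟨h1, h2, h3, fun x hx => ?_⟩
      have := h4 x hx
      have : (x : ℕ) ≠ b := fun h => h5 (Fin.ext h ▸ hx)
      omega
    · rintro ⟨h1, h2, h3, h4⟩
      exact ⟨⟨h1, h2, h3, fun x hx => (h4 x hx).trans (Nat.lt_succ_self _)⟩,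
        fun h => (h4 b h).false⟩
  · -- Removing the first turn `(i, b)` matches these paths with `tailsBelow`.
    rw [Finset.mul_sum]
    refine Finset.sum_nbij' (fun p => (p.1.erase i, p.2.erase b))
      (fun p => (insert i p.1, insert b p.2)) ?_ ?_ ?_ ?_ ?_
    · intro p hp
      simp only [pathsBelow, tailsBelow, min_eq_coe_iff, Finset.mem_filter, Finset.mem_univ,
        true_and] at hp ⊢
      obtain ⟨⟨⟨h1, h1'⟩, ⟨h2, h2'⟩, h3, h4⟩, h5⟩ := hp
      refine ⟨?_, ⟨?_, ?_⟩, ?_, ?_⟩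
      · intro x hx
        have := h1' x (Finset.mem_of_mem_erase hx)
        exact Fin.lt_def.1 (lt_of_le_of_ne this (Finset.ne_of_mem_erase hx).symm)
      · exact Finset.mem_erase.2 ⟨hjb.ne, h2⟩
      · exact fun x hx => h2' x (Finset.mem_of_mem_erase hx)
      · rw [Finset.card_erase_of_mem h1, Finset.card_erase_of_mem h5, h3]
      · intro x hx
        have := h4 x (Finset.mem_of_mem_erase hx)
        have : (x : ℕ) ≠ b := fun h => Finset.ne_of_mem_erase hx (Fin.ext h)
        omega
    · intro p hp
      simp only [pathsBelow, tailsBelow, min_eq_coe_iff, Finset.mem_filter, Finset.mem_univ,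
        true_and] at hp ⊢
      obtain ⟨h1, ⟨h2, h2'⟩, h3, h4⟩ := hp
      have hi : i ∉ p.1 := fun h => (h1 i h).false
      have hb : b ∉ p.2 := fun h => (h4 b h).false
      refine ⟨⟨⟨by simp, ?_⟩, ⟨by simp [h2], ?_⟩, ?_, ?_⟩, by simp⟩
      · intro x hx
        rcases Finset.mem_insert.1 hx with rfl | hx
        · exact le_rfl
        · exact (h1 x hx).le
      · intro x hx
        rcases Finset.mem_insert.1 hx with rfl | hx
        · exact hjb.le
        · exact h2' x hx
      · rw [Finset.card_insert_of_notMem hi, Finset.card_insert_of_notMem hb, h3]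
      · intro x hx
        rcases Finset.mem_insert.1 hx with rfl | hx
        · exact Nat.lt_succ_self _
        · exact (h4 x hx).trans (Nat.lt_succ_self _)
    · intro p hp
      simp only [pathsBelow, min_eq_coe_iff, Finset.mem_filter, Finset.mem_univ, true_and] at hp
      exact Prod.ext (Finset.insert_erase hp.1.1.1) (Finset.insert_erase hp.2)
    · intro p hp
      simp only [tailsBelow, Finset.mem_filter, Finset.mem_univ, true_and] at hp
      exact Prod.ext (Finset.erase_insert fun h => (hp.1 i h).false)
        (Finset.erase_insert fun h => (hp.2.2.2 b h).false)
    · intro p hp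
      simp only [pathsBelow, min_eq_coe_iff, Finset.mem_filter, Finset.mem_univ, true_and] at hp
      obtain ⟨⟨⟨h1, h1'⟩, ⟨h2, h2'⟩, h3, h4⟩, h5⟩ := hp
      have hc : (p.2.erase b).card = (p.1.erase i).card := by
        rw [Finset.card_erase_of_mem h1, Finset.card_erase_of_mem h5, h3]
      have hne : (p.1.erase i).Nonempty := by
        rw [← Finset.card_pos, ← hc, Finset.card_pos]
        exact ⟨j, Finset.mem_erase.2 ⟨hjb.ne, h2⟩⟩
      rw [enteredWeight, dif_pos hne, ← gammaWeight_insert T hne hc, Finset.insert_erase h1,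
        Finset.insert_erase h5]
      · intro x hx
        exact lt_of_le_of_ne (h1' x (Finset.mem_of_mem_erase hx)) (Finset.ne_of_mem_erase hx).symm
      · intro x hx
        exact lt_of_le_of_ne (Nat.lt_succ_iff.1 (h4 x (Finset.mem_of_mem_erase hx)))
          (Finset.ne_of_mem_erase hx)

lemma tails_last {m n : ℕ} (T : Matrix (Fin m) (Fin n) ℝ) (j b : Fin n) {i : ℕ}
    (hi : m ≤ i + 1) :
    ∑ p ∈ tailsBelow (m := m) j i (b : ℕ), enteredWeight T b p = 0 := by
  refine Finset.sum_eq_zero fun p hp => ?_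
  simp only [tailsBelow, Finset.mem_filter, Finset.mem_univ, true_and] at hp
  rw [enteredWeight, dif_neg]
  rintro ⟨x, hx⟩
  have := hp.1 x hx
  omega

lemma tails_succ {m n : ℕ} (T : Matrix (Fin m) (Fin n) ℝ) (j b : Fin n) {i : ℕ}
    (hi : i + 1 < m) :
    ∑ p ∈ tailsBelow (m := m) j i (b : ℕ), enteredWeight T b p =
      (T ⟨i + 1, hi⟩ b)⁻¹ * partialSum T j ⟨i + 1, hi⟩ (b : ℕ) +
      ∑ p ∈ tailsBelow (m := m) j (i + 1) (b : ℕ), enteredWeight T b p := by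
  rw [← Finset.sum_filter_add_sum_filter_not _ (fun p => (⟨i + 1, hi⟩ : Fin m) ∈ p.1)]
  congr 1
  · rw [partialSum, Finset.mul_sum]
    refine Finset.sum_congr ?_ ?_
    · ext p
      simp only [pathsBelow, tailsBelow, min_eq_coe_iff (m := m), Finset.mem_filter,
        Finset.mem_univ, true_and]
      exact ⟨fun h => ⟨⟨h.2, h.1.1⟩, h.1.2⟩, fun h => ⟨⟨h.1.2, h.2⟩, h.1.1⟩⟩
    · intro p hp
      simp only [pathsBelow, Finset.mem_filter, Finset.mem_univ, true_and] at hp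
      have hne : p.1.Nonempty := ⟨_, Finset.mem_of_min hp.1⟩
      have : p.1.min' hne = ⟨i + 1, hi⟩ := by
        have h := hp.1
        rw [← Finset.coe_min' hne] at h
        exact_mod_cast h
      rw [enteredWeight, dif_pos hne, this]
  · refine Finset.sum_congr ?_ fun _ _ => rfl
    ext p
    simp only [tailsBelow, Finset.mem_filter, Finset.mem_univ, true_and]
    constructor
    · rintro ⟨⟨h1, h2⟩, h3⟩
      refine ⟨fun x hx => ?_, h2⟩
      have := h1 x hx
      have : (x : ℕ) ≠ i + 1 := by
        intro h
        exact h3 ((Fin.ext h : x = ⟨i + 1, hi⟩) ▸ hx)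
      omega
    · rintro ⟨h1, h2⟩
      exact ⟨⟨fun x hx => (Nat.lt_succ_self _).trans (h1 x hx), h2⟩, fun h => (h1 _ h).false⟩

/-- The path sums obey the same recursion as the residues, see `Residue.step`. -/
lemma partialSum_rec {m n : ℕ} (T : Matrix (Fin m) (Fin n) ℝ) {j b : Fin n} (hjb : j < b)
    {i : ℕ} (hi : i + 1 < m) (hT : T ⟨i + 1, hi⟩ b ≠ 0) :
    partialSum T j ⟨i, by omega⟩ (b + 1) = partialSum T j ⟨i, by omega⟩ b +
      T ⟨i, by omega⟩ b / T ⟨i + 1, hi⟩ b * partialSum T j ⟨i + 1, hi⟩ (b + 1) := by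
  rw [partialSum_succ T hjb, partialSum_succ T hjb ⟨i + 1, hi⟩, tails_succ T j b hi]
  field_simp

lemma partialSum_self {m n : ℕ} (T : Matrix (Fin m) (Fin n) ℝ) (j : Fin n) (i : Fin m) :
    partialSum T j i (j + 1) = T i j := by
  have : pathsBelow j i (j + 1) = {({i}, {j})} := by
    ext ⟨I, J⟩
    simp only [pathsBelow, min_eq_coe_iff, Finset.mem_filter, Finset.mem_univ, true_and,
      Finset.mem_singleton, Prod.mk.injEq]
    constructor
    · rintro ⟨⟨h1, h1'⟩, ⟨h2, h2'⟩, h3, h4⟩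
      have hJ : J = {j} := Finset.eq_singleton_iff_unique_mem.2 ⟨h2, fun x hx =>
        le_antisymm (Nat.lt_succ_iff.1 (h4 x hx)) (h2' x hx)⟩
      subst hJ
      obtain ⟨y, rfl⟩ := Finset.card_eq_one.1 (h3.symm.trans (Finset.card_singleton j))
      simp only [Finset.mem_singleton] at h1
      exact ⟨by rw [h1], rfl⟩
    · rintro ⟨rfl, rfl⟩
      simp
  rw [partialSum, this, Finset.sum_singleton, gammaWeight_singleton]

/-- The path sums restricted to turns in columns `≤ b` are the residues at `b`. -/
lemma residue_partialSum {m n : ℕ} {X T : Matrix (Fin m) (Fin n) ℝ} (hX : TotallyPositive X)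
    (hpos : EntrywisePos T)
    (hT : ∀ (i : Fin m) (j : Fin n), Residue X i j j (T i j)) (j : Fin n) {b : ℕ}
    (hjb : (j : ℕ) ≤ b) (hb : b < n) (i : Fin m) :
    Residue X i j b (partialSum T j i (b + 1)) := by
  induction b, hjb using Nat.le_induction generalizing i with
  | base =>
    rw [partialSum_self]
    exact hT i j
  | succ b hjb ih =>
    have hlt : j < ⟨b + 1, hb⟩ := Nat.lt_succ_of_le hjb
    obtain ⟨i, hi⟩ := i
    obtain ⟨d, hd⟩ : ∃ d, m = i + 1 + d := ⟨m - (i + 1), by omega⟩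
    -- Upward induction on the row, starting from the last one.
    induction d generalizing i with
    | zero =>
      have h := partialSum_succ T hlt ⟨i, hi⟩
      rw [tails_last (i := i) T j _ (by omega), mul_zero, add_zero] at h
      rw [residue_iff_of_min_eq_zero j.isLt (by dsimp only; omega)]
      rw [h]
      exact (residue_iff_of_min_eq_zero j.isLt (by dsimp only; omega)).1
        (ih (by omega) ⟨i, hi⟩)
    | succ d ihd =>
      have hi' : i + 1 < m := by omega
      have hne := (hpos ⟨i + 1, hi'⟩ ⟨b + 1, hb⟩).ne'
      have h := partialSum_rec T hlt hi' hne
      simp only at h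
      rw [h]
      exact Residue.step hX hi' hb hjb hne (ih (by omega) ⟨i, hi⟩) (ihd _ hi' (by omega))
        (hT ⟨i, hi⟩ ⟨b + 1, hb⟩) (hT ⟨i + 1, hi'⟩ ⟨b + 1, hb⟩)

/-- every totally positive matrix has a Γ-scaffolding, given explicitly by
`t_{ij} = det X[{i⋯},{j⋯}] / det X[{i+1⋯},{j+1⋯}]` (1-based indices). -/
theorem exists_gammaScaffolding {m n : ℕ} (X : Matrix (Fin m) (Fin n) ℝ)
    (hX : TotallyPositive X) (T : Matrix (Fin m) (Fin n) ℝ)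
    (hT : ∀ (i : Fin m) (j : Fin n),
      T i j = contigMinorTL X ((i : ℕ) + 1) ((j : ℕ) + 1) /
          contigMinorTL X ((i : ℕ) + 2) ((j : ℕ) + 2)) :
    EntrywisePos T ∧ XGamma T = X := by
  have hpos : EntrywisePos T := by
    intro i j
    rw [hT, contigMinorTL_eq, contigMinorTL_eq X ((i : ℕ) + 1) ((j : ℕ) + 1)]
    exact div_pos (contigDet_pos hX (by omega) (by omega))
      (contigDet_pos hX (by omega) (by omega))
  refine ⟨hpos, ?_⟩
  ext i j
  have hn : n - 1 + 1 = n := by have := j.isLt; omega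
  have h := residue_partialSum hX hpos
    (fun i j => by rw [hT]; exact residue_diag hX i.isLt j.isLt) j (b := n - 1)
    (by omega) (by omega) i
  rw [residue_iff_of_min_eq_zero j.isLt (by omega), hn] at h
  rw [XGamma_apply, ← h, natEntry, dif_pos ⟨i.isLt, j.isLt⟩]
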